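/- arXiv:2006.07861 — 6 statements merged into one kernel-verified Lean document; each statement's English description precedes it below -/
import Mathlib

section
/- There is an isomorphism of F2-algebras A → G sending Sq^r to Sq^{2r} for every r ≥ 0; equivalently, the two-sided ideals I_A and I_G of the free algebra F coincide, so the identity on generators induces an algebra isomorphism F/I_A ≅ F/I_G. -/
open Finset

/-- The free associative unital `F2`-algebra on generators `x_1, x_2, x_3, …`. -/
noncomputable abbrev FreeSteenrod : Type := FreeAlgebra (ZMod 2) ℕ+

/-- The generators `x_r` for `r ≥ 1`, with `x_0` denoting the unit `1`. -/
noncomputable def xgen (n : ℕ) : FreeSteenrod :=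
  if h : n = 0 then 1 else FreeAlgebra.ι (ZMod 2) (⟨n, Nat.pos_of_ne_zero h⟩ : ℕ+)

/-- The classical Adem element
`a(r,s) = x_r x_s + Σ_{t=0}^{⌊r/2⌋} C(s−t−1, r−2t) x_{r+s−t} x_t` (mod 2 coefficients). -/
noncomputable def ademClassical (r s : ℕ) : FreeSteenrod :=
  xgen r * xgen s +
    ∑ t ∈ Finset.range (r / 2 + 1),
      (Nat.choose (s - t - 1) (r - 2 * t) : ZMod 2) • (xgen (r + s - t) * xgen t)

/-- The even motivic (`τ = 0`) Adem element
`g(r,s) = x_r x_s + Σ_{t=0}^{⌊r/2⌋} C(2s−2t−1, 2r−4t) x_{r+s−t} x_t` (mod 2 coefficients). -/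
noncomputable def ademMotivicEven (r s : ℕ) : FreeSteenrod :=
  xgen r * xgen s +
    ∑ t ∈ Finset.range (r / 2 + 1),
      (Nat.choose (2 * s - 2 * t - 1) (2 * r - 4 * t) : ZMod 2) • (xgen (r + s - t) * xgen t)

theorem choose_double_mod_two (m k : ℕ) :
    ((Nat.choose (2 * m + 1) (2 * k) : ℕ) : ZMod 2) = (Nat.choose m k : ZMod 2) := by
  haveI : Fact (Nat.Prime 2) := ⟨Nat.prime_two⟩
  have h := Choose.choose_modEq_choose_mod_mul_choose_div_nat (n := 2 * m + 1) (k := 2 * k) (p := 2)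
  have h1 : (2 * m + 1) % 2 = 1 := by omega
  have h2 : (2 * k) % 2 = 0 := by omega
  have h3 : (2 * m + 1) / 2 = m := by omega
  have h4 : (2 * k) / 2 = k := by omega
  rw [h1, h2, h3, h4, Nat.choose_zero_right, one_mul] at h
  exact (ZMod.natCast_eq_natCast_iff _ _ _).2 h

theorem adem_eq (r s : ℕ) (h : r < 2 * s) : ademClassical r s = ademMotivicEven r s := by
  unfold ademClassical ademMotivicEven
  congr 1
  refine Finset.sum_congr rfl fun t ht => ?_
  rw [Finset.mem_range] at ht
  have e1 : 2 * s - 2 * t - 1 = 2 * (s - t - 1) + 1 := by omega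
  have e2 : 2 * r - 4 * t = 2 * (r - 2 * t) := by omega
  rw [e1, e2, choose_double_mod_two]

/-- The two-sided ideal of classical Adem relations coincides with the two-sided ideal of
even motivic (`τ = 0`) Adem relations, so the identity on generators induces an isomorphism
of `F2`-algebras `A = F/I_A ≅ G = F/I_G` sending `Sq^r` to `Sq^{2r}`. -/
theorem stmt_1 :
    TwoSidedIdeal.span {y : FreeSteenrod | ∃ r s : ℕ, 0 < r ∧ r < 2 * s ∧ y = ademClassical r s}
      = TwoSidedIdeal.span
          {y : FreeSteenrod | ∃ r s : ℕ, 0 < r ∧ r < 2 * s ∧ y = ademMotivicEven r s} := by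
  congr 1
  ext y
  constructor
  · rintro ⟨r, s, h0, h, rfl⟩
    exact ⟨r, s, h0, h, adem_eq r s h⟩
  · rintro ⟨r, s, h0, h, rfl⟩
    exact ⟨r, s, h0, h, (adem_eq r s h).symm⟩
end

section
/- Let η : 𝟙_C ⟶ E exhibit E as an idempotent object of C, and let A be an object of C such that E ⊗ A is a zero object. Then for every object Y of C, every morphism f : A ⟶ E ⊗ Y is the zero morphism. -/
open CategoryTheory MonoidalCategory Limits

/-- If `η : 𝟙_C ⟶ E` exhibits `E` as an idempotent object of a monoidal category `C` with
zero morphisms, and `A` is an object such that `E ⊗ A` is a zero object, then every morphism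
`f : A ⟶ E ⊗ Y` is zero. -/
theorem stmt_2 {C : Type*} [Category C] [MonoidalCategory C] [HasZeroMorphisms C]
    {E : C} (η : 𝟙_ C ⟶ E)
    (hη : IsIso ((λ_ E).inv ≫ (η ▷ E)))
    {A : C} (hA : IsZero (E ⊗ A))
    (Y : C) (f : A ⟶ E ⊗ Y) : f = 0 := by
  have hg : (λ_ (E ⊗ Y)).inv ≫ η ▷ (E ⊗ Y)
      = ((λ_ E).inv ≫ (η ▷ E)) ▷ Y ≫ (α_ E E Y).hom := by
    simp
  have hiso : IsIso ((λ_ (E ⊗ Y)).inv ≫ η ▷ (E ⊗ Y)) := by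
    rw [hg]; infer_instance
  have h1 : f ≫ ((λ_ (E ⊗ Y)).inv ≫ η ▷ (E ⊗ Y)) = (λ_ A).inv ≫ η ▷ A ≫ E ◁ f := by
    rw [← whisker_exchange, leftUnitor_inv_naturality_assoc]
  rw [← cancel_mono ((λ_ (E ⊗ Y)).inv ≫ η ▷ (E ⊗ Y)), h1, hA.eq_of_src (E ◁ f) 0]
  simp only [comp_zero, zero_comp]
end

section
/- Let A′ →^ε 𝟙_C →^η E →^δ A′⟦1⟧ be a distinguished triangle in C such that the composite A′ ⊗ A′ →^{ε ⊗ id} 𝟙_C ⊗ A′ ≅ A′ (ε ⊗ id_{A′} followed by the left unitor) is an isomorphism. Then E ⊗ A′ and A′ ⊗ E are zero objects of C, and η exhibits E as an idempotent object. -/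
open CategoryTheory MonoidalCategory Limits Pretriangulated

/-- Let `C` be a symmetric monoidal pretriangulated category such that, for every object `W`,
the functors `W ⊗ −` and `− ⊗ W` are additive and triangulated (they commute with the shift and
send distinguished triangles to distinguished triangles).  If
`A′ →^ε 𝟙_C →^η E →^δ A′⟦1⟧` is a distinguished triangle such that the composite
`A′ ⊗ A′ →^{ε ▷ A′} 𝟙_C ⊗ A′ ≅ A′` is an isomorphism, then `E ⊗ A′` and `A′ ⊗ E` are zero
objects and `η` exhibits `E` as an idempotent object. -/
theorem stmt_3 {C : Type*} [Category C] [MonoidalCategory C] [SymmetricCategory C]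
    [Preadditive C] [HasZeroObject C] [HasShift C ℤ]
    [∀ n : ℤ, (shiftFunctor C n).Additive] [Pretriangulated C]
    [∀ W : C, (tensorLeft W).Additive] [∀ W : C, (tensorRight W).Additive]
    [∀ W : C, (tensorLeft W).CommShift ℤ] [∀ W : C, (tensorRight W).CommShift ℤ]
    [∀ W : C, (tensorLeft W).IsTriangulated] [∀ W : C, (tensorRight W).IsTriangulated]
    {A' E : C} (ε : A' ⟶ 𝟙_ C) (η : 𝟙_ C ⟶ E) (δ : E ⟶ A'⟦(1 : ℤ)⟧)
    (hT : Triangle.mk ε η δ ∈ distTriang C)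
    (hA : IsIso ((ε ▷ A') ≫ (λ_ A').hom)) :
    IsZero (E ⊗ A') ∧ IsZero (A' ⊗ E) ∧ IsIso ((λ_ E).inv ≫ (η ▷ E)) := by
  have h1 : IsIso (ε ▷ A') := IsIso.of_isIso_comp_right (ε ▷ A') (λ_ A').hom
  have hEA : IsZero (E ⊗ A') :=
    Triangle.isZero₃_of_isIso₁ _ ((tensorRight A').map_distinguished _ hT) h1
  have hAE : IsZero (A' ⊗ E) := hEA.of_iso (β_ A' E)
  have h2 : IsIso (η ▷ E) :=
    (Triangle.isZero₁_iff_isIso₂ _ ((tensorRight E).map_distinguished _ hT)).1 hAE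
  exact ⟨hEA, hAE, inferInstance⟩
end

section
/- Let A′ →^ε 𝟙_C →^η E →^δ A′⟦1⟧ be a distinguished triangle in C such that the composite A′ ⊗ A′ →^{ε ⊗ id} 𝟙_C ⊗ A′ ≅ A′ is an isomorphism. Then for all objects X, Y of C, precomposition with the morphism X ≅ 𝟙_C ⊗ X →^{η ⊗ id_X} E ⊗ X induces a bijection Hom_C(E ⊗ X, E ⊗ Y) → Hom_C(X, E ⊗ Y). -/
open CategoryTheory MonoidalCategory Limits Pretriangulated

/-- Let `C` be a symmetric monoidal pretriangulated category such that, for every object `W`,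
the functors `W ⊗ −` and `− ⊗ W` are additive and triangulated.  If
`A′ →^ε 𝟙_C →^η E →^δ A′⟦1⟧` is a distinguished triangle such that the composite
`A′ ⊗ A′ →^{ε ▷ A′} 𝟙_C ⊗ A′ ≅ A′` is an isomorphism, then for all objects `X, Y`
precomposition with `X ≅ 𝟙_C ⊗ X →^{η ▷ X} E ⊗ X` induces a bijection
`Hom(E ⊗ X, E ⊗ Y) → Hom(X, E ⊗ Y)`. -/
theorem stmt_4 {C : Type*} [Category C] [MonoidalCategory C] [SymmetricCategory C]
    [Preadditive C] [HasZeroObject C] [HasShift C ℤ]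
    [∀ n : ℤ, (shiftFunctor C n).Additive] [Pretriangulated C]
    [∀ W : C, (tensorLeft W).Additive] [∀ W : C, (tensorRight W).Additive]
    [∀ W : C, (tensorLeft W).CommShift ℤ] [∀ W : C, (tensorRight W).CommShift ℤ]
    [∀ W : C, (tensorLeft W).IsTriangulated] [∀ W : C, (tensorRight W).IsTriangulated]
    {A' E : C} (ε : A' ⟶ 𝟙_ C) (η : 𝟙_ C ⟶ E) (δ : E ⟶ A'⟦(1 : ℤ)⟧)
    (hT : Triangle.mk ε η δ ∈ distTriang C)
    (hA : IsIso ((ε ▷ A') ≫ (λ_ A').hom)) (X Y : C) :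
    Function.Bijective
      (fun g : (E ⊗ X ⟶ E ⊗ Y) => (λ_ X).inv ≫ (η ▷ X) ≫ g) := by
  have h1 : IsIso (ε ▷ A') := by
    have := hA
    exact IsIso.of_isIso_comp_right (ε ▷ A') (λ_ A').hom
  have hz : IsZero (E ⊗ A') :=
    (Triangle.isZero₃_iff_isIso₁ _ ((tensorRight A').map_distinguished _ hT)).2 h1
  have hz' : IsZero (A' ⊗ E) := hz.of_iso (β_ A' E)
  have h2 : IsIso (E ◁ η) :=
    (Triangle.isZero₁_iff_isIso₂ _ ((tensorLeft E).map_distinguished _ hT)).1 hz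
  have h3 : IsIso (η ▷ E) :=
    (Triangle.isZero₁_iff_isIso₂ _ ((tensorRight E).map_distinguished _ hT)).1 hz'
  have h4 : IsIso (η ▷ (E ⊗ Y)) := by
    have e : η ▷ (E ⊗ Y) = (α_ _ _ _).inv ≫ (η ▷ E) ▷ Y ≫ (α_ _ _ _).hom := by simp
    rw [e]; infer_instance
  have h5 : IsIso (E ◁ (η ▷ X)) := by
    have e : E ◁ (η ▷ X) = (α_ _ _ _).inv ≫ (E ◁ η) ▷ X ≫ (α_ _ _ _).hom := by simp
    rw [e]; infer_instance
  constructor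
  · intro g g' h
    have h : (λ_ X).inv ≫ (η ▷ X) ≫ g = (λ_ X).inv ≫ (η ▷ X) ≫ g' := h
    rw [cancel_epi] at h
    have hE : E ◁ g = E ◁ g' := by
      have := congrArg (fun f => E ◁ f) h
      simp only [MonoidalCategory.whiskerLeft_comp] at this
      exact (cancel_epi _).1 this
    have hU : 𝟙_ C ◁ g = 𝟙_ C ◁ g' := by
      rw [← cancel_mono (η ▷ (E ⊗ Y)), whisker_exchange, whisker_exchange, hE]
    simpa using hU
  · intro f
    refine ⟨E ◁ f ≫ inv (η ▷ (E ⊗ Y)) ≫ (λ_ _).hom, ?_⟩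
    change (λ_ X).inv ≫ (η ▷ X) ≫ E ◁ f ≫ inv (η ▷ (E ⊗ Y)) ≫ (λ_ _).hom = f
    rw [← whisker_exchange_assoc, IsIso.hom_inv_id_assoc]
    simp
end

section
/- If η : 𝟙_C ⟶ E exhibits E as an idempotent object of the symmetric monoidal category C, then there exists a unique morphism μ : E ⊗ E ⟶ E such that (E, η, μ) is a commutative monoid object in C; moreover this μ is an isomorphism. -/
open CategoryTheory MonoidalCategory

/-- If `η : 𝟙_C ⟶ E` exhibits `E` as an idempotent object of a symmetric monoidal category
`C`, then there exists a unique morphism `μ : E ⊗ E ⟶ E` such that `(E, η, μ)` is a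
commutative monoid object in `C`; moreover this `μ` is an isomorphism. -/
theorem stmt_6 {C : Type*} [Category C] [MonoidalCategory C] [SymmetricCategory C]
    {E : C} (η : 𝟙_ C ⟶ E) (hη : IsIso ((λ_ E).inv ≫ (η ▷ E))) :
    (∃! μ : E ⊗ E ⟶ E,
      (η ▷ E) ≫ μ = (λ_ E).hom ∧
      (E ◁ η) ≫ μ = (ρ_ E).hom ∧
      (μ ▷ E) ≫ μ = (α_ E E E).hom ≫ (E ◁ μ) ≫ μ ∧
      (β_ E E).hom ≫ μ = μ) ∧
    (∀ μ : E ⊗ E ⟶ E,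
      ((η ▷ E) ≫ μ = (λ_ E).hom ∧
       (E ◁ η) ≫ μ = (ρ_ E).hom ∧
       (μ ▷ E) ≫ μ = (α_ E E E).hom ≫ (E ◁ μ) ≫ μ ∧
       (β_ E E).hom ≫ μ = μ) → IsIso μ) := by
  have h1 : IsIso (η ▷ E) := by
    have : η ▷ E = (λ_ E).hom ≫ ((λ_ E).inv ≫ (η ▷ E)) := by simp
    rw [this]; infer_instance
  have h2 : IsIso (E ◁ η) := by
    have : E ◁ η = (β_ E (𝟙_ C)).hom ≫ η ▷ E ≫ (β_ E E).inv := by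
      rw [← BraidedCategory.braiding_naturality_right_assoc]; simp
    rw [this]; infer_instance
  have h3 : IsIso (η ▷ (E ⊗ E)) := by
    have : η ▷ (E ⊗ E) = (α_ _ _ _).inv ≫ (η ▷ E) ▷ E ≫ (α_ _ _ _).hom := by simp
    rw [this]; infer_instance
  -- morphisms out of `E` into `E ⊗ E` are determined by their restriction along `η`
  have key : ∀ f g : E ⟶ E ⊗ E, η ≫ f = η ≫ g → f = g := by
    intro f g h
    have hw : E ◁ f = E ◁ g := by
      rw [← cancel_epi (E ◁ η), ← whiskerLeft_comp, ← whiskerLeft_comp, h]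
    have hz : 𝟙_ C ◁ f = 𝟙_ C ◁ g := by
      rw [← cancel_mono (η ▷ (E ⊗ E)), whisker_exchange, whisker_exchange, hw]
    simpa using hz
  have hLR : (λ_ E).inv ≫ η ▷ E = (ρ_ E).inv ≫ E ◁ η := by
    apply key
    rw [leftUnitor_inv_naturality_assoc, rightUnitor_inv_naturality_assoc, whisker_exchange,
      unitors_inv_equal]
  have hR : E ◁ η = (ρ_ E).hom ≫ (λ_ E).inv ≫ η ▷ E := by rw [hLR]; simp
  have hb : (β_ E E).hom = 𝟙 _ := by
    rw [← cancel_epi (η ▷ E), BraidedCategory.braiding_naturality_left, hR]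
    simp
  refine ⟨⟨inv (η ▷ E) ≫ (λ_ E).hom, ⟨by simp, by rw [hR]; simp, ?_, by rw [hb]; simp⟩, ?_⟩, ?_⟩
  · have hμ : η ▷ E ≫ (inv (η ▷ E) ≫ (λ_ E).hom) = (λ_ E).hom := by simp
    generalize inv (η ▷ E) ≫ (λ_ E).hom = μ at hμ
    rw [← cancel_epi ((η ▷ E) ▷ E), ← comp_whiskerRight_assoc, hμ,
      associator_naturality_left_assoc, ← whisker_exchange_assoc, hμ]
    simp
  · rintro μ ⟨h, -⟩
    rw [← cancel_epi (η ▷ E), h]; simp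
  · rintro μ ⟨h, -⟩
    have : μ = inv (η ▷ E) ≫ (λ_ E).hom := by
      rw [← cancel_epi (η ▷ E), h]; simp
    rw [this]; infer_instance
end

section
/- Every Λ-linear map f : N → H ⊗_{F2} N' takes values in the subspace r_∅ ⊗ N'. Consequently, the natural map Hom_{F2}(N, N') → Hom_Λ(N, H ⊗_{F2} N'), sending g to the map n ↦ r_∅ ⊗ g(n), is a bijection. -/
open TensorProduct

set_option synthInstance.maxHeartbeats 1000000
set_option maxHeartbeats 1000000

/-- `Λ`, the exterior algebra over `F2` on a countable family of generators
`Q_0, Q_1, Q_2, …` (the exterior algebra of the free `F2`-module with basis indexed by `ℕ`). -/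
noncomputable abbrev IsoLambda : Type := ExteriorAlgebra (ZMod 2) (ℕ →₀ ZMod 2)

/-- `H`, the `F2`-vector space with basis `{r_I : I a finite subset of ℕ}`, modelling the
isotropic motivic cohomology of the point. -/
abbrev IsoH : Type := Finset ℕ →₀ ZMod 2

/-- The generator `Q_j` of the exterior algebra `Λ`. -/
noncomputable def isoQ (j : ℕ) : IsoLambda :=
  ExteriorAlgebra.ι (ZMod 2) (Finsupp.single j (1 : ZMod 2))

/-- The basis element `r_I` of `H`. -/
noncomputable def isoR (I : Finset ℕ) : IsoH := Finsupp.single I (1 : ZMod 2)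

/-- Let `H` carry the `Λ`-module structure determined by `Q_j • r_I = r_{I∖{j}}` if `j ∈ I`
and `0` otherwise, and let `N`, `N'` be `F2`-vector spaces, `N` regarded as a `Λ`-module with
every `Q_j` acting as zero and `H ⊗_{F2} N'` as a `Λ`-module through the factor `H`.  Then
every `Λ`-linear map `f : N → H ⊗_{F2} N'` takes values in the subspace `r_∅ ⊗ N'`, and
consequently the natural map `Hom_{F2}(N, N') → Hom_Λ(N, H ⊗_{F2} N')`, `g ↦ (n ↦ r_∅ ⊗ g n)`,
is a bijection. -/
theorem stmt_9
    [Module IsoLambda IsoH] [IsScalarTower (ZMod 2) IsoLambda IsoH]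
    [SMulCommClass (ZMod 2) IsoLambda IsoH]
    (hH : ∀ (j : ℕ) (I : Finset ℕ),
      isoQ j • isoR I = if j ∈ I then isoR (I.erase j) else 0)
    (N N' : Type) [AddCommGroup N] [Module (ZMod 2) N]
    [Module IsoLambda N] [IsScalarTower (ZMod 2) IsoLambda N]
    (hN : ∀ (j : ℕ) (n : N), isoQ j • n = 0)
    [AddCommGroup N'] [Module (ZMod 2) N'] :
    -- every `Λ`-linear map `f : N → H ⊗ N'` takes values in the subspace `r_∅ ⊗ N'`:
    (∀ (f : N →ₗ[IsoLambda] (IsoH ⊗[ZMod 2] N')) (n : N),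
      f n ∈ LinearMap.range (TensorProduct.mk (ZMod 2) IsoH N' (isoR ∅))) ∧
    -- the natural map `Hom_{F2}(N, N') → Hom_Λ(N, H ⊗ N')`, `g ↦ (n ↦ r_∅ ⊗ g n)`,
    -- is well defined and bijective:
    (∀ g : N →ₗ[ZMod 2] N', ∃ f : N →ₗ[IsoLambda] (IsoH ⊗[ZMod 2] N'),
      ∀ n : N, f n = isoR ∅ ⊗ₜ[ZMod 2] g n) ∧
    (∀ f : N →ₗ[IsoLambda] (IsoH ⊗[ZMod 2] N'), ∃! g : N →ₗ[ZMod 2] N',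
      ∀ n : N, f n = isoR ∅ ⊗ₜ[ZMod 2] g n) := by
  classical
  let e := TensorProduct.finsuppScalarLeft (ZMod 2) N' (Finset ℕ)
  have he : ∀ (I : Finset ℕ) (y : N'), e (isoR I ⊗ₜ[ZMod 2] y) = Finsupp.single I y := by
    intro I y
    simp only [e, isoR, TensorProduct.finsuppScalarLeft_apply_tmul]
    rw [Finsupp.sum_single_index] <;> simp
  have hsm : ∀ (a : IsoLambda) (h : IsoH) (y : N'),
      a • (h ⊗ₜ[ZMod 2] y) = (a • h) ⊗ₜ[ZMod 2] y := fun a h y =>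
    TensorProduct.smul_tmul' a h y
  have hsym : ∀ (I : Finset ℕ) (y : N'),
      e.symm (Finsupp.single I y) = isoR I ⊗ₜ[ZMod 2] y := by
    intro I y
    rw [LinearEquiv.symm_apply_eq, he]
  have key : ∀ (j : ℕ) (w : Finset ℕ →₀ N') (J : Finset ℕ),
      e (isoQ j • e.symm w) J = if j ∈ J then 0 else w (insert j J) := by
    intro j w J
    induction w using Finsupp.induction_linear with
    | zero => simp
    | add u v hu hv =>
      rw [map_add, smul_add, map_add, Finsupp.add_apply, hu, hv]
      split_ifs <;> simp
    | single I y =>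
      rw [hsym, hsm, hH]
      by_cases hj : j ∈ I
      · rw [if_pos hj, he]
        by_cases hJ : j ∈ J
        · rw [if_pos hJ, Finsupp.single_apply, if_neg]
          rintro rfl
          simp at hJ
        · rw [if_neg hJ, Finsupp.single_apply, Finsupp.single_apply]
          congr 1
          apply propext
          constructor
          · rintro rfl
            exact (Finset.insert_erase hj).symm
          · rintro rfl
            exact Finset.erase_insert hJ
      · rw [if_neg hj, TensorProduct.zero_tmul, map_zero, Finsupp.single_apply, if_neg (c := I = insert j J)]
        · simp
        · rintro rfl
          simp at hj
  have hfix : ∀ x : IsoH ⊗[ZMod 2] N', (∀ j, isoQ j • x = 0) →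
      x = isoR ∅ ⊗ₜ[ZMod 2] (e x ∅) := by
    intro x hx
    rw [← hsym, LinearEquiv.eq_symm_apply]
    ext I
    rcases I.eq_empty_or_nonempty with rfl | ⟨j, hj⟩
    · simp
    · have h := key j (e x) (I.erase j)
      rw [LinearEquiv.symm_apply_apply, hx j, if_neg (by simp), Finset.insert_erase hj] at h
      rw [← h, Finsupp.single_apply, if_neg]
      · simp
      · rintro rfl
        simp at hj
  have hf : ∀ (f : N →ₗ[IsoLambda] (IsoH ⊗[ZMod 2] N')) (n : N),
      f n = isoR ∅ ⊗ₜ[ZMod 2] (e (f n) ∅) := by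
    intro f n
    apply hfix
    intro j
    rw [← map_smul, hN, map_zero]
  refine ⟨fun f n => ⟨_, (hf f n).symm⟩, ?_, ?_⟩
  · intro g
    have hlin : ∀ (a : IsoLambda) (n : N),
        isoR ∅ ⊗ₜ[ZMod 2] g (a • n) = a • (isoR ∅ ⊗ₜ[ZMod 2] g n) := by
      intro a
      induction a using ExteriorAlgebra.induction with
      | algebraMap r =>
        intro n
        rw [hsm, algebraMap_smul, algebraMap_smul, map_smul, TensorProduct.tmul_smul,
          TensorProduct.smul_tmul']
      | ι v =>
        intro n
        induction v using Finsupp.induction_linear with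
        | zero => simp
        | add u v hu hv =>
          rw [map_add, add_smul, map_add, TensorProduct.tmul_add, hu, hv, add_smul]
        | single j c =>
          have hc : ExteriorAlgebra.ι (ZMod 2) (Finsupp.single j c) = c • isoQ j := by
            rw [isoQ, ← map_smul, Finsupp.smul_single, smul_eq_mul, mul_one]
          rw [hc, hsm, smul_assoc, smul_assoc, hN, hH]
          simp
      | mul a b ha hb =>
        intro n
        rw [mul_smul, ha, hb, mul_smul]
      | add a b ha hb =>
        intro n
        rw [add_smul, map_add, TensorProduct.tmul_add, ha, hb, add_smul]
    exact ⟨{ toFun := fun n => isoR ∅ ⊗ₜ[ZMod 2] g n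
             map_add' := fun x y => by rw [map_add, TensorProduct.tmul_add]
             map_smul' := fun a n => hlin a n }, fun n => rfl⟩
  · intro f
    refine ⟨AddMonoidHom.toZModLinearMap 2
      { toFun := fun n => e (f n) ∅
        map_zero' := by simp
        map_add' := fun x y => by simp }, fun n => hf f n, ?_⟩
    intro g hg
    ext n
    change g n = e (f n) ∅
    rw [hg n, he]
    simp
end
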